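/- Let Σ be a subset of the function symbols occurring in the EUF formula G, let f ∈ Σ, and let Ĝ be the result of eliminating f from G by the nested-ITE construction with fresh domain variables vf_1,...,vf_n. Then for any interpretation J that is diverse for G with respect to Σ, there is an interpretation Ĵ that is diverse for Ĝ with respect to (Σ \ {f}) ∪ {vf_1,...,vf_n} and satisfies Ĵ[Ĝ] = J[G]. -/

import Mathlib

mutual
inductive EufTerm (Fn Pr : Type) : Type
  | app : Fn → List (EufTerm Fn Pr) → EufTerm Fn Pr
  | ite : EufFormula Fn Pr → EufTerm Fn Pr → EufTerm Fn Pr → EufTerm Fn Pr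
inductive EufFormula (Fn Pr : Type) : Type
  | tt : EufFormula Fn Pr
  | ff : EufFormula Fn Pr
  | not : EufFormula Fn Pr → EufFormula Fn Pr
  | and : EufFormula Fn Pr → EufFormula Fn Pr → EufFormula Fn Pr
  | or : EufFormula Fn Pr → EufFormula Fn Pr → EufFormula Fn Pr
  | eq : EufTerm Fn Pr → EufTerm Fn Pr → EufFormula Fn Pr
  | papp : Pr → List (EufTerm Fn Pr) → EufFormula Fn Pr
end

structure Interp (Fn Pr : Type) (D : Type u) where
  fn : Fn → List D → D
  pr : Pr → List D → Bool

open Classical in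
mutual
noncomputable def evalT {Fn Pr : Type} {D : Type} (I : Interp Fn Pr D) : EufTerm Fn Pr → D
  | .app f args => I.fn f (args.attach.map (fun t => evalT I t.1))
  | .ite G T1 T2 => if evalF I G then evalT I T1 else evalT I T2
termination_by t => sizeOf t
decreasing_by
  all_goals simp_wf
  all_goals try omega
  all_goals (have := List.sizeOf_lt_of_mem t.2; omega)
noncomputable def evalF {Fn Pr : Type} {D : Type} (I : Interp Fn Pr D) : EufFormula Fn Pr → Bool
  | .tt => true
  | .ff => false
  | .not G => !evalF I G
  | .and G1 G2 => evalF I G1 && evalF I G2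
  | .or G1 G2 => evalF I G1 || evalF I G2
  | .eq T1 T2 => decide (evalT I T1 = evalT I T2)
  | .papp p args => I.pr p (args.attach.map (fun t => evalT I t.1))
termination_by g => sizeOf g
decreasing_by
  all_goals simp_wf
  all_goals try omega
  all_goals (have := List.sizeOf_lt_of_mem t.2; omega)
end
def ValidOn {Fn Pr : Type} (F : EufFormula Fn Pr) (D : Type) : Prop :=
  ∀ I : Interp Fn Pr D, evalF I F = true

def UniversallyValid {Fn Pr : Type} (F : EufFormula Fn Pr) : Prop :=
  ∀ D : Type, Nonempty D → ValidOn F D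

/-- Expressions: terms or formulas. -/
inductive EufExpr (Fn Pr : Type) : Type
  | t : EufTerm Fn Pr → EufExpr Fn Pr
  | f : EufFormula Fn Pr → EufExpr Fn Pr

/-- Immediate (proper) subexpression relation. -/
inductive ImmSub {Fn Pr : Type} : EufExpr Fn Pr → EufExpr Fn Pr → Prop
  | appArg {g : Fn} {args : List (EufTerm Fn Pr)} {T : EufTerm Fn Pr} :
      T ∈ args → ImmSub (.t T) (.t (.app g args))
  | iteC {G : EufFormula Fn Pr} {T1 T2 : EufTerm Fn Pr} : ImmSub (.f G) (.t (.ite G T1 T2))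
  | ite1 {G : EufFormula Fn Pr} {T1 T2 : EufTerm Fn Pr} : ImmSub (.t T1) (.t (.ite G T1 T2))
  | ite2 {G : EufFormula Fn Pr} {T1 T2 : EufTerm Fn Pr} : ImmSub (.t T2) (.t (.ite G T1 T2))
  | not {G : EufFormula Fn Pr} : ImmSub (.f G) (.f (.not G))
  | andL {G1 G2 : EufFormula Fn Pr} : ImmSub (.f G1) (.f (.and G1 G2))
  | andR {G1 G2 : EufFormula Fn Pr} : ImmSub (.f G2) (.f (.and G1 G2))
  | orL {G1 G2 : EufFormula Fn Pr} : ImmSub (.f G1) (.f (.or G1 G2))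
  | orR {G1 G2 : EufFormula Fn Pr} : ImmSub (.f G2) (.f (.or G1 G2))
  | eqL {T1 T2 : EufTerm Fn Pr} : ImmSub (.t T1) (.f (.eq T1 T2))
  | eqR {T1 T2 : EufTerm Fn Pr} : ImmSub (.t T2) (.f (.eq T1 T2))
  | pappArg {p : Pr} {args : List (EufTerm Fn Pr)} {T : EufTerm Fn Pr} :
      T ∈ args → ImmSub (.t T) (.f (.papp p args))

/-- `SubExpr a b`: `a` occurs (as a subexpression) in `b`. -/
def SubExpr {Fn Pr : Type} (a b : EufExpr Fn Pr) : Prop := Relation.ReflTransGen ImmSub a b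

def TermInT {Fn Pr : Type} (T S : EufTerm Fn Pr) : Prop := SubExpr (.t T) (.t S)
def TermInF {Fn Pr : Type} (T : EufTerm Fn Pr) (F : EufFormula Fn Pr) : Prop :=
  SubExpr (.t T) (.f F)
def FormulaInT {Fn Pr : Type} (G : EufFormula Fn Pr) (S : EufTerm Fn Pr) : Prop :=
  SubExpr (.f G) (.t S)
def FormulaInF {Fn Pr : Type} (G F : EufFormula Fn Pr) : Prop := SubExpr (.f G) (.f F)

def IsAppTerm {Fn Pr : Type} : EufTerm Fn Pr → Prop
  | .app _ _ => True
  | _ => False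

/-- `𝒯(F)`: the function application terms occurring in `F`. -/
def AppTermsF {Fn Pr : Type} (F : EufFormula Fn Pr) : Set (EufTerm Fn Pr) :=
  {T | IsAppTerm T ∧ TermInF T F}

/-- A function symbol occurs in `F` when some application of it occurs in `F`. -/
def FnInF {Fn Pr : Type} (g : Fn) (F : EufFormula Fn Pr) : Prop :=
  ∃ args, TermInF (EufTerm.app g args) F

def PrInF {Fn Pr : Type} (p : Pr) (F : EufFormula Fn Pr) : Prop :=
  ∃ args, FormulaInF (EufFormula.papp p args) F

/-- `I` is diverse for `F` with respect to the set `Sg` of function symbols. -/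
def DiverseFor {Fn Pr D : Type} (I : Interp Fn Pr D) (F : EufFormula Fn Pr)
    (Sg : Set Fn) : Prop :=
  ∀ (g : Fn) (args : List (EufTerm Fn Pr)), g ∈ Sg →
    TermInF (EufTerm.app g args) F →
    ∀ T2 ∈ AppTermsF F, evalT I (EufTerm.app g args) = evalT I T2 →
      ∃ args2, T2 = EufTerm.app g args2 ∧
        List.Forall₂ (fun a b => evalT I a = evalT I b) args args2

mutual
/-- PEUF g-terms, where `isP` designates the p-function symbols. -/
inductive IsGTerm {Fn Pr : Type} (isP : Fn → Prop) : EufTerm Fn Pr → Prop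
  | ite {G : EufFormula Fn Pr} {T1 T2 : EufTerm Fn Pr} :
      IsGFormula isP G → IsGTerm isP T1 → IsGTerm isP T2 → IsGTerm isP (.ite G T1 T2)
  | app {g : Fn} {args : List (EufTerm Fn Pr)} :
      ¬ isP g → (∀ T ∈ args, IsPTerm isP T) → IsGTerm isP (.app g args)
/-- PEUF p-terms. -/
inductive IsPTerm {Fn Pr : Type} (isP : Fn → Prop) : EufTerm Fn Pr → Prop
  | g {T : EufTerm Fn Pr} : IsGTerm isP T → IsPTerm isP T
  | ite {G : EufFormula Fn Pr} {T1 T2 : EufTerm Fn Pr} :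
      IsGFormula isP G → IsPTerm isP T1 → IsPTerm isP T2 → IsPTerm isP (.ite G T1 T2)
  | app {g : Fn} {args : List (EufTerm Fn Pr)} :
      isP g → (∀ T ∈ args, IsPTerm isP T) → IsPTerm isP (.app g args)
/-- PEUF g-formulas. -/
inductive IsGFormula {Fn Pr : Type} (isP : Fn → Prop) : EufFormula Fn Pr → Prop
  | tt : IsGFormula isP .tt
  | ff : IsGFormula isP .ff
  | not {G : EufFormula Fn Pr} : IsGFormula isP G → IsGFormula isP (.not G)
  | and {G1 G2 : EufFormula Fn Pr} :
      IsGFormula isP G1 → IsGFormula isP G2 → IsGFormula isP (.and G1 G2)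
  | or {G1 G2 : EufFormula Fn Pr} :
      IsGFormula isP G1 → IsGFormula isP G2 → IsGFormula isP (.or G1 G2)
  | eq {T1 T2 : EufTerm Fn Pr} :
      IsGTerm isP T1 → IsGTerm isP T2 → IsGFormula isP (.eq T1 T2)
  | papp {p : Pr} {args : List (EufTerm Fn Pr)} :
      (∀ T ∈ args, IsPTerm isP T) → IsGFormula isP (.papp p args)
/-- PEUF p-formulas. -/
inductive IsPFormula {Fn Pr : Type} (isP : Fn → Prop) : EufFormula Fn Pr → Prop
  | g {G : EufFormula Fn Pr} : IsGFormula isP G → IsPFormula isP G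
  | and {G1 G2 : EufFormula Fn Pr} :
      IsPFormula isP G1 → IsPFormula isP G2 → IsPFormula isP (.and G1 G2)
  | or {G1 G2 : EufFormula Fn Pr} :
      IsPFormula isP G1 → IsPFormula isP G2 → IsPFormula isP (.or G1 G2)
  | eq {T1 T2 : EufTerm Fn Pr} :
      IsPTerm isP T1 → IsPTerm isP T2 → IsPFormula isP (.eq T1 T2)
end

/-- The p-function symbols occurring in `F`. -/
def PSymbolsIn {Fn Pr : Type} (isP : Fn → Prop) (F : EufFormula Fn Pr) : Set Fn :=
  {g | isP g ∧ FnInF g F}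

/-- `I` is maximally diverse for the p-formula `F`. -/
def MaxDiverse {Fn Pr D : Type} (isP : Fn → Prop) (I : Interp Fn Pr D)
    (F : EufFormula Fn Pr) : Prop :=
  DiverseFor I F (PSymbolsIn isP F)

/-- `I'` refines `I` on the term set `Ts`. -/
def RefinesOn {Fn Pr D D' : Type} (I' : Interp Fn Pr D') (I : Interp Fn Pr D)
    (Ts : Set (EufTerm Fn Pr)) : Prop :=
  ∀ T1 ∈ Ts, ∀ T2 ∈ Ts, evalT I' T1 = evalT I' T2 → evalT I T1 = evalT I T2

def ProperRefinesOn {Fn Pr D D' : Type} (I' : Interp Fn Pr D') (I : Interp Fn Pr D)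
    (Ts : Set (EufTerm Fn Pr)) : Prop :=
  RefinesOn I' I Ts ∧
    ∃ T1 ∈ Ts, ∃ T2 ∈ Ts, evalT I T1 = evalT I T2 ∧ evalT I' T1 ≠ evalT I' T2
open Classical in
mutual
/-- Substitute the term `B` for each instance of the term `A`. -/
noncomputable def substT {Fn Pr : Type} (A B : EufTerm Fn Pr) : EufTerm Fn Pr → EufTerm Fn Pr
  | .app g args =>
      if EufTerm.app g args = A then B
      else .app g (args.attach.map (fun t => substT A B t.1))
  | .ite G T1 T2 =>
      if EufTerm.ite G T1 T2 = A then B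
      else .ite (substF A B G) (substT A B T1) (substT A B T2)
termination_by t => sizeOf t
decreasing_by
  all_goals simp_wf
  all_goals try omega
  all_goals (have := List.sizeOf_lt_of_mem t.2; omega)
noncomputable def substF {Fn Pr : Type} (A B : EufTerm Fn Pr) : EufFormula Fn Pr → EufFormula Fn Pr
  | .tt => .tt
  | .ff => .ff
  | .not G => .not (substF A B G)
  | .and G1 G2 => .and (substF A B G1) (substF A B G2)
  | .or G1 G2 => .or (substF A B G1) (substF A B G2)
  | .eq T1 T2 => .eq (substT A B T1) (substT A B T2)
  | .papp p args => .papp p (args.attach.map (fun t => substT A B t.1))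
termination_by g => sizeOf g
decreasing_by
  all_goals simp_wf
  all_goals try omega
  all_goals (have := List.sizeOf_lt_of_mem t.2; omega)
end

open Classical in
mutual
/-- Substitute the formula `B` for each instance of the formula `A` inside a term. -/
noncomputable def fsubstT {Fn Pr : Type} (A B : EufFormula Fn Pr) : EufTerm Fn Pr → EufTerm Fn Pr
  | .app g args => .app g (args.attach.map (fun t => fsubstT A B t.1))
  | .ite G T1 T2 => .ite (fsubstF A B G) (fsubstT A B T1) (fsubstT A B T2)
termination_by t => sizeOf t
decreasing_by
  all_goals simp_wf
  all_goals try omega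
  all_goals (have := List.sizeOf_lt_of_mem t.2; omega)
/-- Substitute the formula `B` for each instance of the formula `A`. -/
noncomputable def fsubstF {Fn Pr : Type} (A B : EufFormula Fn Pr) : EufFormula Fn Pr → EufFormula Fn Pr
  | .tt => if EufFormula.tt = A then B else .tt
  | .ff => if EufFormula.ff = A then B else .ff
  | .not G => if EufFormula.not G = A then B else .not (fsubstF A B G)
  | .and G1 G2 => if EufFormula.and G1 G2 = A then B else .and (fsubstF A B G1) (fsubstF A B G2)
  | .or G1 G2 => if EufFormula.or G1 G2 = A then B else .or (fsubstF A B G1) (fsubstF A B G2)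
  | .eq T1 T2 => if EufFormula.eq T1 T2 = A then B else .eq (fsubstT A B T1) (fsubstT A B T2)
  | .papp p args =>
      if EufFormula.papp p args = A then B
      else .papp p (args.attach.map (fun t => fsubstT A B t.1))
termination_by g => sizeOf g
decreasing_by
  all_goals simp_wf
  all_goals try omega
  all_goals (have := List.sizeOf_lt_of_mem t.2; omega)
end
/-- The formula `C_{i,j}`: conjunction of the equations between transformed arguments. -/
def Cform {Fn Pr : Type} (hatS : ℕ → ℕ → EufTerm Fn Pr) (k i j : ℕ) : EufFormula Fn Pr :=
  ((List.range' 1 k).map (fun l => EufFormula.eq (hatS i l) (hatS j l))).foldr .and .tt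

/-- The nested-ITE term `V_{i,j}`. -/
def Vterm {Fn Pr : Type} (vf : ℕ → Fn) (hatS : ℕ → ℕ → EufTerm Fn Pr) (k i : ℕ) :
    ℕ → EufTerm Fn Pr
  | j =>
    if h : j < i then
      .ite (Cform hatS k i j) (.app (vf j) []) (Vterm vf hatS k i (j+1))
    else .app (vf i) []
termination_by j => i - j
decreasing_by omega

/-- The nested-ITE term `U_i` replacing the i-th f-application. -/
def Uterm {Fn Pr : Type} (vf : ℕ → Fn) (hatS : ℕ → ℕ → EufTerm Fn Pr) (k i : ℕ) :
    EufTerm Fn Pr :=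
  Vterm vf hatS k i 1

/-- `stepT … i E = E⁽ⁱ⁾` for terms. -/
noncomputable def stepT {Fn Pr : Type} (Ts : ℕ → EufTerm Fn Pr) (vf : ℕ → Fn)
    (hatS : ℕ → ℕ → EufTerm Fn Pr) (k : ℕ) : ℕ → EufTerm Fn Pr → EufTerm Fn Pr
  | 0, E => E
  | i+1, E =>
      substT (stepT Ts vf hatS k i (Ts (i+1))) (Uterm vf hatS k (i+1)) (stepT Ts vf hatS k i E)

/-- `stepF … i E = E⁽ⁱ⁾` for formulas. -/
noncomputable def stepF {Fn Pr : Type} (Ts : ℕ → EufTerm Fn Pr) (vf : ℕ → Fn)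
    (hatS : ℕ → ℕ → EufTerm Fn Pr) (k : ℕ) : ℕ → EufFormula Fn Pr → EufFormula Fn Pr
  | 0, E => E
  | i+1, E =>
      substF (stepT Ts vf hatS k i (Ts (i+1))) (Uterm vf hatS k (i+1)) (stepF Ts vf hatS k i E)

/-- The f-order of a term: the largest index `i ∈ [1,n]` with `Ts i` occurring in `E`. -/
noncomputable def fordT {Fn Pr : Type} (n : ℕ) (Ts : ℕ → EufTerm Fn Pr)
    (E : EufTerm Fn Pr) : ℕ :=
  sSup {i | 1 ≤ i ∧ i ≤ n ∧ TermInT (Ts i) E}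

/-- The f-order of a formula. -/
noncomputable def fordF {Fn Pr : Type} (n : ℕ) (Ts : ℕ → EufTerm Fn Pr)
    (E : EufFormula Fn Pr) : ℕ :=
  sSup {i | 1 ≤ i ∧ i ≤ n ∧ TermInF (Ts i) E}

/-- `Ê` for terms: `E⁽ᵐ⁾` where `m` is the f-order of `E`. -/
noncomputable def hatT {Fn Pr : Type} (n : ℕ) (Ts : ℕ → EufTerm Fn Pr) (vf : ℕ → Fn)
    (hatS : ℕ → ℕ → EufTerm Fn Pr) (k : ℕ) (E : EufTerm Fn Pr) : EufTerm Fn Pr :=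
  stepT Ts vf hatS k (fordT n Ts E) E

/-- `Ê` for formulas. -/
noncomputable def hatF {Fn Pr : Type} (n : ℕ) (Ts : ℕ → EufTerm Fn Pr) (vf : ℕ → Fn)
    (hatS : ℕ → ℕ → EufTerm Fn Pr) (k : ℕ) (E : EufFormula Fn Pr) : EufFormula Fn Pr :=
  stepF Ts vf hatS k (fordF n Ts E) E

/-- Hypotheses of the nested-ITE elimination of the function symbol `f` from `G`:
`Ts 1, …, Ts n` are the syntactically distinct f-application terms of `G` (ordered so that
subterms precede superterms) with argument terms `S i 1, …, S i k`; the `vf i` are fresh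
domain variables; and `hatS i l` is the transformed argument term `Ŝ_{i,l}`. -/
structure ElimHyps {Fn Pr : Type} (G : EufFormula Fn Pr) (f : Fn) (k n : ℕ)
    (Ts : ℕ → EufTerm Fn Pr) (S : ℕ → ℕ → EufTerm Fn Pr) (vf : ℕ → Fn)
    (hatS : ℕ → ℕ → EufTerm Fn Pr) : Prop where
  k_pos : 1 ≤ k
  ts_app : ∀ i, 1 ≤ i → i ≤ n → Ts i = EufTerm.app f ((List.range' 1 k).map (S i))
  ts_occurs : ∀ i, 1 ≤ i → i ≤ n → TermInF (Ts i) G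
  ts_distinct : ∀ i j, 1 ≤ i → i ≤ n → 1 ≤ j → j ≤ n → Ts i = Ts j → i = j
  ts_complete : ∀ args, TermInF (EufTerm.app f args) G →
      ∃ i, 1 ≤ i ∧ i ≤ n ∧ EufTerm.app f args = Ts i
  ts_order : ∀ i j, 1 ≤ i → i ≤ n → 1 ≤ j → j ≤ n → TermInT (Ts i) (Ts j) → i ≠ j → i < j
  vf_fresh : ∀ i, 1 ≤ i → i ≤ n → ¬ FnInF (vf i) G
  vf_inj : ∀ i j, 1 ≤ i → i ≤ n → 1 ≤ j → j ≤ n → vf i = vf j → i = j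
  vf_ne_f : ∀ i, 1 ≤ i → i ≤ n → vf i ≠ f
  hatS_spec : ∀ j l, 1 ≤ j → j ≤ n → 1 ≤ l → l ≤ k →
      hatS j l = stepT Ts vf hatS k (fordT n Ts (S j l)) (S j l)

/-- `Ĝ = G⁽ⁿ⁾`: the result of eliminating `f` from `G`. -/
noncomputable def elimResult {Fn Pr : Type} (G : EufFormula Fn Pr) (n : ℕ)
    (Ts : ℕ → EufTerm Fn Pr) (vf : ℕ → Fn) (hatS : ℕ → ℕ → EufTerm Fn Pr) (k : ℕ) :
    EufFormula Fn Pr :=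
  stepF Ts vf hatS k n G


namespace PD
variable {Fn Pr : Type}

noncomputable def sz : EufExpr Fn Pr → ℕ
  | .t T => sizeOf T
  | .f F => sizeOf F

theorem sz_imm {a b : EufExpr Fn Pr} (h : ImmSub a b) : sz a < sz b := by
  cases h <;> simp [sz] <;> try omega
  all_goals (rename_i h; have := List.sizeOf_lt_of_mem h; omega)

theorem sz_sub {a b : EufExpr Fn Pr} (h : SubExpr a b) : sz a ≤ sz b := by
  induction h with
  | refl => exact le_rfl
  | tail _ h ih => exact ih.trans (sz_imm h).le

theorem expr_ind (P : EufExpr Fn Pr → Prop)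
    (h : ∀ e, (∀ e', ImmSub e' e → P e') → P e) (e : EufExpr Fn Pr) : P e := by
  have : ∀ m, ∀ e, sz e < m → P e := by
    intro m
    induction m with
    | zero => intro e he; omega
    | succ m ih =>
      intro e he
      exact h e fun e' h' => ih e' (by have := sz_imm h'; omega)
  exact this _ e (Nat.lt_succ_self _)

theorem sub_imm {a b c : EufExpr Fn Pr} (h : ImmSub a b) (h' : SubExpr b c) : SubExpr a c :=
  Relation.ReflTransGen.head h h'

theorem sub_tail {a b c : EufExpr Fn Pr} (h : SubExpr a b) (h' : ImmSub b c) : SubExpr a c :=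
  Relation.ReflTransGen.tail h h'

theorem sub_inv {a c : EufExpr Fn Pr} (h : SubExpr a c) :
    a = c ∨ ∃ b, SubExpr a b ∧ ImmSub b c := by
  rcases Relation.ReflTransGen.cases_tail h with h | ⟨b, h, h'⟩
  · exact Or.inl h.symm
  · exact Or.inr ⟨b, h, h'⟩

/-! evaluation and substitution equations -/
section
variable {D : Type} (I : Interp Fn Pr D)

theorem evalT_app (g : Fn) (args) :
    evalT I (.app g args) = I.fn g (args.map (evalT I)) := by
  rw [evalT]; congr 1; simp

theorem evalF_papp (g : Pr) (args) :
    evalF I (.papp g args) = I.pr g (args.map (evalT I)) := by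
  rw [evalF]; congr 1; simp

end

def substE (A B : EufTerm Fn Pr) : EufExpr Fn Pr → Prop
  | .t T => substT A B T = T
  | .f F => substF A B F = F

theorem substT_app_ne {A B : EufTerm Fn Pr} {g args} (h : EufTerm.app g args ≠ A) :
    substT A B (.app g args) = .app g (args.map (substT A B)) := by
  rw [substT, if_neg h]; congr 1; simp

theorem substT_self {A B : EufTerm Fn Pr} : substT A B A = B := by
  cases A <;> rw [substT, if_pos rfl]

theorem substT_ite_ne {A B : EufTerm Fn Pr} {C a b} (h : EufTerm.ite C a b ≠ A) :
    substT A B (.ite C a b) = .ite (substF A B C) (substT A B a) (substT A B b) := by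
  rw [substT, if_neg h]

theorem substF_papp {A B : EufTerm Fn Pr} {p args} :
    substF A B (.papp p args) = .papp p (args.map (substT A B)) := by
  rw [substF]; congr 1; simp

theorem map_id_mem {α : Type*} {l : List α} {f : α → α} (h : ∀ a ∈ l, f a = a) : l.map f = l := by
  conv_rhs => rw [← List.map_id l]
  exact List.map_congr_left h

theorem subst_none (A B : EufTerm Fn Pr) (e : EufExpr Fn Pr) :
    ¬ SubExpr (.t A) e → substE A B e := by
  induction e using expr_ind with
  | h e ih =>
  intro hn
  have ih' : ∀ e', ImmSub e' e → substE A B e' := fun e' h => ih e' h fun h' => hn (sub_tail h' h)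
  cases e with
  | t T =>
    have hne : T ≠ A := by rintro rfl; exact hn .refl
    cases T with
    | app g args =>
      simp only [substE]
      rw [substT_app_ne hne, map_id_mem]
      exact fun a ha => ih' _ (.appArg ha)
    | ite C a b =>
      simp only [substE]
      rw [substT_ite_ne hne]
      have h1 := ih' _ .iteC
      have h2 := ih' _ .ite1
      have h3 := ih' _ .ite2
      simp only [substE] at h1 h2 h3
      rw [h1, h2, h3]
  | f F =>
    cases F with
    | tt => simp [substE, substF]
    | ff => simp [substE, substF]
    | not F => have h1 := ih' _ .not; simp only [substE] at h1 ⊢; rw [substF, h1]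
    | and F1 F2 =>
      have h1 := ih' _ .andL; have h2 := ih' _ .andR
      simp only [substE] at h1 h2 ⊢; rw [substF, h1, h2]
    | or F1 F2 =>
      have h1 := ih' _ .orL; have h2 := ih' _ .orR
      simp only [substE] at h1 h2 ⊢; rw [substF, h1, h2]
    | eq F1 F2 =>
      have h1 := ih' _ .eqL; have h2 := ih' _ .eqR
      simp only [substE] at h1 h2 ⊢; rw [substF, h1, h2]
    | papp p args =>
      simp only [substE]
      rw [substF_papp, map_id_mem]
      exact fun a ha => ih' _ (.pappArg ha)

/-! step on formulas -/
section
variable (Ts : ℕ → EufTerm Fn Pr) (vf : ℕ → Fn) (hatS : ℕ → ℕ → EufTerm Fn Pr) (k : ℕ)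

theorem stepF_tt (i) : stepF Ts vf hatS k i .tt = .tt := by
  induction i with
  | zero => rfl
  | succ i ih => rw [stepF, ih, substF]
theorem stepF_ff (i) : stepF Ts vf hatS k i .ff = .ff := by
  induction i with
  | zero => rfl
  | succ i ih => rw [stepF, ih, substF]
theorem stepF_not (i F) : stepF Ts vf hatS k i (.not F) = .not (stepF Ts vf hatS k i F) := by
  induction i with
  | zero => rfl
  | succ i ih => rw [stepF, ih, substF]; rfl
theorem stepF_and (i F F') : stepF Ts vf hatS k i (.and F F') =
    .and (stepF Ts vf hatS k i F) (stepF Ts vf hatS k i F') := by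
  induction i with
  | zero => rfl
  | succ i ih => rw [stepF, ih, substF]; rfl
theorem stepF_or (i F F') : stepF Ts vf hatS k i (.or F F') =
    .or (stepF Ts vf hatS k i F) (stepF Ts vf hatS k i F') := by
  induction i with
  | zero => rfl
  | succ i ih => rw [stepF, ih, substF]; rfl
theorem stepF_eq (i F F') : stepF Ts vf hatS k i (.eq F F') =
    .eq (stepT Ts vf hatS k i F) (stepT Ts vf hatS k i F') := by
  induction i with
  | zero => rfl
  | succ i ih => rw [stepF, ih, substF]; rfl
theorem stepF_papp (i p args) : stepF Ts vf hatS k i (.papp p args) =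
    .papp p (args.map (stepT Ts vf hatS k i)) := by
  induction i with
  | zero => simp [stepF, stepT, map_id_mem]
  | succ i ih => rw [stepF, ih, substF_papp, List.map_map]; rfl

/-! occurrences in Cform and Vterm -/

theorem occ_foldr {X : EufTerm Fn Pr} (L : List (EufFormula Fn Pr))
    (h : TermInF X (L.foldr .and .tt)) : ∃ F ∈ L, TermInF X F := by
  induction L with
  | nil =>
    rcases sub_inv h with h | ⟨b, _, h⟩
    · cases h
    · cases h
  | cons F L ih =>
    rcases sub_inv h with h | ⟨b, hb, h⟩
    · cases h
    · cases h with
      | andL => exact ⟨F, by simp, hb⟩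
      | andR =>
        obtain ⟨F', h1, h2⟩ := ih hb
        exact ⟨F', by simp [h1], h2⟩

theorem occ_C {X : EufTerm Fn Pr} {i j} (h : TermInF X (Cform hatS k i j)) :
    ∃ l, 1 ≤ l ∧ l ≤ k ∧ (TermInT X (hatS i l) ∨ TermInT X (hatS j l)) := by
  obtain ⟨F, hF, h⟩ := occ_foldr _ h
  simp only [List.mem_map, List.mem_range'_1] at hF
  obtain ⟨l, hl, rfl⟩ := hF
  refine ⟨l, by omega, by omega, ?_⟩
  rcases sub_inv h with h | ⟨b, hb, h⟩
  · cases h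
  · cases h with
    | eqL => exact Or.inl hb
    | eqR => exact Or.inr hb

theorem occ_V {g : Fn} {args : List (EufTerm Fn Pr)} {i} (d : ℕ) :
    ∀ j, i - j = d → 1 ≤ j → j ≤ i → TermInT (.app g args) (Vterm vf hatS k i j) →
    (∃ m, 1 ≤ m ∧ m ≤ i ∧ g = vf m ∧ args = []) ∨
    ∃ m l, 1 ≤ m ∧ m ≤ i ∧ 1 ≤ l ∧ l ≤ k ∧ TermInT (.app g args) (hatS m l) := by
  have base : ∀ m, 1 ≤ m → m ≤ i → TermInT (.app g args) (EufTerm.app (vf m) [] : EufTerm Fn Pr) →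
      (∃ m, 1 ≤ m ∧ m ≤ i ∧ g = vf m ∧ args = []) := by
    intro m h1 h2 h
    rcases sub_inv h with h | ⟨b, hb, h⟩
    · simp only [EufExpr.t.injEq, EufTerm.app.injEq] at h
      exact ⟨m, h1, h2, h⟩
    · cases h with
      | appArg h => simp at h
  induction d with
  | zero =>
    intro j hd h1 h2 h
    have : j = i := by omega
    subst this
    rw [Vterm, dif_neg (by omega)] at h
    exact Or.inl (base j h1 le_rfl h)
  | succ d ih =>
    intro j hd h1 h2 h
    rw [Vterm, dif_pos (by omega)] at h
    rcases sub_inv h with h | ⟨b, hb, h⟩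
    · cases h
    · cases h with
      | iteC =>
        obtain ⟨l, hl, hl', h | h⟩ := occ_C hatS k hb
        · exact Or.inr ⟨i, l, by omega, le_rfl, hl, hl', h⟩
        · exact Or.inr ⟨j, l, by omega, by omega, hl, hl', h⟩
      | ite1 => exact Or.inl (base j h1 h2 hb)
      | ite2 => exact ih (j+1) (by omega) (by omega) (by omega) hb

def spine : EufTerm Fn Pr → Fn × ℕ
  | .app g _ => (g, 0)
  | .ite _ _ b => ((spine b).1, (spine b).2 + 1)

theorem spine_V {i} (d : ℕ) : ∀ j, i - j = d → j ≤ i → 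
    spine (Vterm vf hatS k i j) = (vf i, i - j) := by
  induction d with
  | zero =>
    intro j hd h2
    have : j = i := by omega
    subst this
    rw [Vterm, dif_neg (by omega)]
    simp [spine]
  | succ d ih =>
    intro j hd h2
    rw [Vterm, dif_pos (by omega), spine, ih (j+1) (by omega) (by omega)]
    simp; omega

end

theorem map_inj_mem {α β : Type*} {f : α → β} : ∀ {l l' : List α},
    (∀ a ∈ l, ∀ b ∈ l', f a = f b → a = b) → l.map f = l'.map f → l = l' := by
  intro l
  induction l with
  | nil => intro l' _ h; simp at h; exact h.symm
  | cons a l ih =>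
    intro l' H h
    cases l' with
    | nil => simp at h
    | cons b l' =>
      simp only [List.map_cons, List.cons.injEq] at h
      rw [H a (by simp) b (by simp) h.1,
        ih (fun a ha b hb => H a (by simp [ha]) b (by simp [hb])) h.2]

section
variable {G : EufFormula Fn Pr} {f : Fn} {k n : ℕ}
    {Ts : ℕ → EufTerm Fn Pr} {S : ℕ → ℕ → EufTerm Fn Pr} {vf : ℕ → Fn}
    {hatS : ℕ → ℕ → EufTerm Fn Pr}

structure Good (G : EufFormula Fn Pr) (f : Fn) (k : ℕ)
    (Ts : ℕ → EufTerm Fn Pr) (vf : ℕ → Fn)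
    (hatS : ℕ → ℕ → EufTerm Fn Pr) (i : ℕ) : Prop where
  p1 : ∀ j, 1 ≤ j → j ≤ i → stepT Ts vf hatS k i (Ts j) = Uterm vf hatS k j
  p2 : ∀ g args, TermInF (.app g args) G → (∀ j, 1 ≤ j → j ≤ i → EufTerm.app g args ≠ Ts j) →
    stepT Ts vf hatS k i (.app g args) = .app g (args.map (stepT Ts vf hatS k i))
  p3 : ∀ C a b, stepT Ts vf hatS k i (.ite C a b) =
    .ite (stepF Ts vf hatS k i C) (stepT Ts vf hatS k i a) (stepT Ts vf hatS k i b)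
  p4 : ∀ j, 1 ≤ j → j ≤ i → ∀ args, ¬ TermInT (.app f args) (Uterm vf hatS k j)

/-- the step function on expressions -/
noncomputable def stepE (Ts : ℕ → EufTerm Fn Pr) (vf : ℕ → Fn)
    (hatS : ℕ → ℕ → EufTerm Fn Pr) (k i : ℕ) : EufExpr Fn Pr → EufExpr Fn Pr
  | .t T => .t (stepT Ts vf hatS k i T)
  | .f F => .f (stepF Ts vf hatS k i F)

theorem S_mem (he : ElimHyps G f k n Ts S vf hatS) {j l} (hj : 1 ≤ j) (hj' : j ≤ n) (hl : 1 ≤ l)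
    (hl' : l ≤ k) : ImmSub (.t (S j l)) (.t (Ts j)) := by
  rw [he.ts_app j hj hj']
  apply ImmSub.appArg
  simp only [List.mem_map, List.mem_range'_1]
  exact ⟨l, by omega, rfl⟩

theorem S_inG (he : ElimHyps G f k n Ts S vf hatS) {j l} (hj : 1 ≤ j) (hj' : j ≤ n) (hl : 1 ≤ l)
    (hl' : l ≤ k) : TermInF (S j l) G :=
  sub_imm (S_mem he hj hj' hl hl') (he.ts_occurs j hj hj')

theorem S_lt (he : ElimHyps G f k n Ts S vf hatS) {j l m} (hj : 1 ≤ j) (hj' : j ≤ n) (hl : 1 ≤ l)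
    (hl' : l ≤ k) (hm : 1 ≤ m) (hm' : m ≤ n) (h : TermInT (Ts m) (S j l)) : m < j := by
  have h1 := S_mem he hj hj' hl hl'
  refine he.ts_order m j hm hm' hj hj' (sub_tail h h1) ?_
  rintro rfl
  have := sz_imm h1
  have := sz_sub h
  omega

theorem ford_le {E : EufTerm Fn Pr} {m} (hm : 1 ≤ m) (hm' : m ≤ n) (h : TermInT (Ts m) E) :
    m ≤ fordT n Ts E := by
  apply le_csSup
  · exact ⟨n, fun x hx => hx.2.1⟩
  · exact ⟨hm, hm', h⟩

theorem ford_S_lt (he : ElimHyps G f k n Ts S vf hatS) {j l} (hj : 1 ≤ j) (hj' : j ≤ n)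
    (hl : 1 ≤ l) (hl' : l ≤ k) : fordT n Ts (S j l) < j := by
  unfold fordT
  rcases Set.eq_empty_or_nonempty {i | 1 ≤ i ∧ i ≤ n ∧ TermInT (Ts i) (S j l)} with h | h
  · rw [h]; simp; omega
  · have := Nat.sSup_mem h ⟨n, fun x hx => hx.2.1⟩
    exact S_lt he hj hj' hl hl' this.1 this.2.1 this.2.2

/-- fully transformed expressions contain no `f`. -/
theorem noF (he : ElimHyps G f k n Ts S vf hatS) {i} (hi : i ≤ n) (hg : Good G f k Ts vf hatS i)
    (e : EufExpr Fn Pr) : SubExpr e (.f G) →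
    (∀ m, 1 ≤ m → m ≤ n → SubExpr (.t (Ts m)) e → m ≤ i) →
    ∀ args, ¬ SubExpr (.t (.app f args)) (stepE Ts vf hatS k i e) := by
  induction e using expr_ind with
  | h e ih =>
  intro hG hb args
  have ih' : ∀ e', ImmSub e' e → ¬ SubExpr (.t (.app f args)) (stepE Ts vf hatS k i e') :=
    fun e' h => ih e' h (sub_imm h hG) (fun m h1 h2 h3 => hb m h1 h2 (sub_tail h3 h)) args
  cases e with
  | t T =>
    cases T with
    | app g as =>
      by_cases hT : ∃ j, 1 ≤ j ∧ j ≤ n ∧ EufTerm.app g as = Ts j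
      · obtain ⟨j, h1, h2, h3⟩ := hT
        have hji : j ≤ i := hb j h1 h2 (by rw [h3]; exact .refl)
        rw [h3, stepE, hg.p1 j h1 hji]
        exact hg.p4 j h1 hji args
      · have hgf : g ≠ f := by
          rintro rfl
          exact hT (he.ts_complete as hG)
        rw [stepE, hg.p2 g as hG (fun j h1 h2 h3 => hT ⟨j, h1, h2.trans hi, h3⟩)]
        intro h
        rcases sub_inv h with h | ⟨b, hb, h⟩
        · simp only [EufExpr.t.injEq, EufTerm.app.injEq] at h
          exact hgf h.1.symm
        · cases h with
          | appArg h =>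
            obtain ⟨a, ha, rfl⟩ := List.mem_map.1 h
            exact ih' _ (.appArg ha) hb
    | ite C a b =>
      rw [stepE, hg.p3]
      intro h
      rcases sub_inv h with h | ⟨b, hb, h⟩
      · cases h
      · cases h with
        | iteC => exact ih' _ .iteC hb
        | ite1 => exact ih' _ .ite1 hb
        | ite2 => exact ih' _ .ite2 hb
  | f F =>
    intro h
    rcases sub_inv h with h | ⟨b, hb, h⟩
    · cases h
    cases F with
    | tt => rw [stepE, stepF_tt] at h; cases h
    | ff => rw [stepE, stepF_ff] at h; cases h
    | not F => rw [stepE, stepF_not] at h; cases h; exact ih' _ .not hb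
    | and F1 F2 =>
      rw [stepE, stepF_and] at h; cases h
      · exact ih' _ .andL hb
      · exact ih' _ .andR hb
    | or F1 F2 =>
      rw [stepE, stepF_or] at h; cases h
      · exact ih' _ .orL hb
      · exact ih' _ .orR hb
    | eq F1 F2 =>
      rw [stepE, stepF_eq] at h; cases h
      · exact ih' _ .eqL hb
      · exact ih' _ .eqR hb
    | papp p as =>
      rw [stepE, stepF_papp] at h
      cases h with
      | pappArg h =>
        obtain ⟨a, ha, rfl⟩ := List.mem_map.1 h
        exact ih' _ (.pappArg ha) hb

theorem spine_step (he : ElimHyps G f k n Ts S vf hatS) {i} (hi : i ≤ n)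
    (hg : Good G f k Ts vf hatS i) {m} (hm : 1 ≤ m) (hm' : m ≤ n)
    (e : EufExpr Fn Pr) : ∀ T, e = .t T → TermInF T G →
    (spine (stepT Ts vf hatS k i T)).1 = vf m →
    m ≤ (spine (stepT Ts vf hatS k i T)).2 + 1 ∧
    ((spine (stepT Ts vf hatS k i T)).2 + 1 = m → T = Ts m) := by
  induction e using expr_ind with
  | h e ih =>
  rintro T rfl hG hs
  cases T with
  | app g as =>
    by_cases hT : ∃ j, 1 ≤ j ∧ j ≤ i ∧ EufTerm.app g as = Ts j
    · obtain ⟨j, h1, h2, h3⟩ := hT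
      rw [h3, hg.p1 j h1 h2, Uterm, spine_V vf hatS k _ 1 rfl h1] at hs ⊢
      have := he.vf_inj j m h1 (h2.trans hi) hm hm' hs
      subst this
      exact ⟨by simp; omega, fun _ => rfl⟩
    · rw [hg.p2 g as hG (fun j h1 h2 h3 => hT ⟨j, h1, h2, h3⟩)] at hs
      simp only [spine] at hs
      exact absurd ⟨as, hs ▸ hG⟩ (he.vf_fresh m hm hm')
  | ite C a b =>
    rw [hg.p3] at hs ⊢
    simp only [spine] at hs ⊢
    have := (ih _ .ite2 b rfl (sub_imm .ite2 hG) hs).1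
    exact ⟨by omega, fun h => by omega⟩

theorem U_inj (he : ElimHyps G f k n Ts S vf hatS) {i} (hi : i ≤ n)
    (hg : Good G f k Ts vf hatS i) {m} (hm : 1 ≤ m) (hm' : m ≤ n) {T}
    (hT : TermInF T G) (h : stepT Ts vf hatS k i T = Uterm vf hatS k m) : T = Ts m := by
  have hs := spine_V vf hatS k _ 1 rfl hm
  rw [Uterm] at h
  rw [← h] at hs
  refine (spine_step he hi hg hm hm' _ T rfl hT (by rw [hs])).2 ?_
  rw [hs]; simp; omega

theorem step_inj (he : ElimHyps G f k n Ts S vf hatS) {i} (hi : i ≤ n)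
    (hg : Good G f k Ts vf hatS i) (e : EufExpr Fn Pr) : ∀ e', SubExpr e (.f G) →
    SubExpr e' (.f G) → stepE Ts vf hatS k i e = stepE Ts vf hatS k i e' → e = e' := by
  induction e using expr_ind with
  | h e ih =>
  intro e' hG hG' h
  have iht : ∀ T T', ImmSub (.t T) e → ImmSub (.t T') e' →
      stepT Ts vf hatS k i T = stepT Ts vf hatS k i T' → T = T' := by
    intro T T' h1 h2 h3
    have := ih _ h1 (.t T') (sub_imm h1 hG) (sub_imm h2 hG') (by rw [stepE, stepE, h3])
    simpa using this
  have ihf : ∀ T T', ImmSub (.f T) e → ImmSub (.f T') e' →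
      stepF Ts vf hatS k i T = stepF Ts vf hatS k i T' → T = T' := by
    intro T T' h1 h2 h3
    have := ih _ h1 (.f T') (sub_imm h1 hG) (sub_imm h2 hG') (by rw [stepE, stepE, h3])
    simpa using this
  cases e with
  | t T =>
    cases e' with
    | f F' => simp [stepE] at h
    | t T' =>
    simp only [stepE, EufExpr.t.injEq] at h ⊢
    by_cases h1 : ∃ j, 1 ≤ j ∧ j ≤ i ∧ T = Ts j
    · obtain ⟨j, a1, a2, rfl⟩ := h1
      rw [hg.p1 j a1 a2] at h
      exact (U_inj he hi hg a1 (a2.trans hi) hG' h.symm).symm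
    by_cases h2 : ∃ j, 1 ≤ j ∧ j ≤ i ∧ T' = Ts j
    · obtain ⟨j, a1, a2, rfl⟩ := h2
      rw [hg.p1 j a1 a2] at h
      exact U_inj he hi hg a1 (a2.trans hi) hG h
    push Not at h1 h2
    cases T with
    | app g as =>
      rw [hg.p2 g as hG h1] at h
      cases T' with
      | app g' as' =>
        rw [hg.p2 g' as' hG' h2] at h
        simp only [EufTerm.app.injEq] at h ⊢
        exact ⟨h.1, map_inj_mem (fun a ha b hb => iht a b (.appArg ha) (.appArg hb)) h.2⟩
      | ite C a b => rw [hg.p3] at h; cases h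
    | ite C a b =>
      rw [hg.p3] at h
      cases T' with
      | app g' as' => rw [hg.p2 g' as' hG' h2] at h; cases h
      | ite C' a' b' =>
        rw [hg.p3] at h
        simp only [EufTerm.ite.injEq] at h ⊢
        exact ⟨ihf _ _ .iteC .iteC h.1, iht _ _ .ite1 .ite1 h.2.1, iht _ _ .ite2 .ite2 h.2.2⟩
  | f F =>
    cases e' with
    | t F' => simp [stepE] at h
    | f F' =>
    simp only [stepE, EufExpr.f.injEq] at h ⊢
    cases F <;> cases F' <;>
      simp only [stepF_tt, stepF_ff, stepF_not, stepF_and, stepF_or, stepF_eq, stepF_papp,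
        EufFormula.not.injEq, EufFormula.and.injEq, EufFormula.or.injEq, EufFormula.eq.injEq,
        EufFormula.papp.injEq, reduceCtorEq] at h ⊢
    · exact ihf _ _ .not .not h
    · exact ⟨ihf _ _ .andL .andL h.1, ihf _ _ .andR .andR h.2⟩
    · exact ⟨ihf _ _ .orL .orL h.1, ihf _ _ .orR .orR h.2⟩
    · exact ⟨iht _ _ .eqL .eqL h.1, iht _ _ .eqR .eqR h.2⟩
    · exact ⟨h.1, map_inj_mem (fun a ha b hb => iht a b (.pappArg ha) (.pappArg hb)) h.2⟩

theorem good (he : ElimHyps G f k n Ts S vf hatS) (i : ℕ) : i ≤ n → Good G f k Ts vf hatS i := by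
  induction i using Nat.strong_induction_on with
  | _ i ih =>
  intro hi
  cases i with
  | zero =>
    refine ⟨fun j _ _ => by omega, ?_, fun _ _ _ => rfl, fun j _ _ => by omega⟩
    intro g args _ _
    rw [stepT, map_id_mem]
    intro a _; rfl
  | succ i =>
    have hg := ih i (by omega) (by omega)
    obtain ⟨as, hA⟩ : ∃ as, stepT Ts vf hatS k i (Ts (i+1)) = .app f as := by
      have := he.ts_app (i+1) (by omega) hi
      rw [this, hg.p2 _ _ (this ▸ he.ts_occurs (i+1) (by omega) hi)]
      · exact ⟨_, rfl⟩
      · intro j h1 h2 h3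
        rw [← this] at h3
        have := he.ts_distinct _ _ (by omega) hi h1 (by omega) h3
        omega
    constructor
    · intro j h1 h2
      rcases Nat.lt_or_ge j (i+1) with h3 | h3
      · rw [stepT, hg.p1 j h1 (by omega)]
        apply subst_none _ _ (.t _)
        rw [hA]
        exact hg.p4 j h1 (by omega) _
      · have : j = i+1 := by omega
        subst this
        rw [stepT, substT_self]
    · intro g args hG hne
      have h1 := hg.p2 g args hG (fun j a b => hne j a (by omega))
      rw [stepT, h1, substT_app_ne, List.map_map]
      · rfl
      · rw [← h1]
        intro h2
        have := step_inj he (by omega) hg (.t (.app g args)) (.t (Ts (i+1))) hG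
          (he.ts_occurs _ (by omega) hi) (by rw [stepE, stepE, h2])
        simp only [EufExpr.t.injEq] at this
        exact hne _ (by omega) le_rfl this
    · intro C a b
      rw [stepT, hg.p3, substT_ite_ne]
      · rfl
      · rw [hA]; simp
    · intro j h1 h2 args h
      rw [Uterm] at h
      rcases occ_V vf hatS k _ 1 rfl le_rfl h1 h with ⟨m, a1, a2, a3, _⟩ | ⟨m, l, a1, a2, a3, a4, h⟩
      · exact he.vf_ne_f m a1 (by omega) a3.symm
      · rw [he.hatS_spec m l a1 (by omega) a3 a4] at h
        have hlt := ford_S_lt he a1 (by omega : m ≤ n) a3 a4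
        exact noF he (by omega) (ih _ (by omega) (by omega)) (.t (S m l))
          (S_inG he a1 (by omega) a3 a4) (fun m' b1 b2 b3 => ford_le b1 b2 b3) args h

theorem hatS_eq (he : ElimHyps G f k n Ts S vf hatS) {j l} (hj : 1 ≤ j) (hj' : j ≤ n)
    (hl : 1 ≤ l) (hl' : l ≤ k) : hatS j l = stepT Ts vf hatS k n (S j l) := by
  rw [he.hatS_spec j l hj hj' hl hl']
  have hlt := ford_S_lt he hj hj' hl hl'
  have key : ∀ d, fordT n Ts (S j l) + d ≤ n →
      stepT Ts vf hatS k (fordT n Ts (S j l)) (S j l) =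
      stepT Ts vf hatS k (fordT n Ts (S j l) + d) (S j l) := by
    intro d
    induction d with
    | zero => intro _; rfl
    | succ d ih =>
      intro hd
      rw [ih (by omega), ← Nat.add_assoc, stepT]
      set i := fordT n Ts (S j l) + d with hi
      have hg := good he i (by omega)
      symm
      apply subst_none _ _ (.t _)
      have := he.ts_app (i+1) (by omega) (by omega)
      rw [this, hg.p2 _ _ (this ▸ he.ts_occurs (i+1) (by omega) (by omega))]
      · refine noF he (by omega) hg (.t (S j l)) (S_inG he hj hj' hl hl') ?_ _
        intro m' b1 b2 b3
        have := ford_le b1 b2 b3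
        omega
      · intro j h1 h2 h3
        rw [← this] at h3
        have := he.ts_distinct _ _ (by omega) (by omega) h1 (by omega) h3
        omega
  have := key (n - fordT n Ts (S j l)) (by omega)
  rwa [Nat.add_sub_cancel' (by omega)] at this

/-- classification of the application terms in the transformed expression -/
theorem classify (he : ElimHyps G f k n Ts S vf hatS) {g : Fn} {args} (b : ℕ) :
    ∀ e : EufExpr Fn Pr, SubExpr e (.f G) →
    (∀ m, 1 ≤ m → m ≤ n → SubExpr (.t (Ts m)) e → m < b) →
    SubExpr (.t (.app g args)) (stepE Ts vf hatS k n e) →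
    (∃ m, 1 ≤ m ∧ m ≤ n ∧ g = vf m ∧ args = []) ∨
    (g ≠ f ∧ ∃ as, TermInF (.app g as) G ∧ args = as.map (stepT Ts vf hatS k n)) := by
  have hg := good he n le_rfl
  induction b using Nat.strong_induction_on with
  | _ b ihb =>
  intro e
  induction e using expr_ind with
  | h e ih =>
  intro hG hlt h
  have ih' : ∀ e', ImmSub e' e → SubExpr (.t (.app g args)) (stepE Ts vf hatS k n e') → _ :=
    fun e' h => ih e' h (sub_imm h hG) (fun m h1 h2 h3 => hlt m h1 h2 (sub_tail h3 h))
  cases e with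
  | t T =>
    cases T with
    | app g' as =>
      by_cases hT : ∃ j, 1 ≤ j ∧ j ≤ n ∧ EufTerm.app g' as = Ts j
      · obtain ⟨j, h1, h2, h3⟩ := hT
        have hjb := hlt j h1 h2 (by rw [h3]; exact .refl)
        rw [h3, stepE, hg.p1 j h1 h2, Uterm] at h
        rcases occ_V vf hatS k _ 1 rfl le_rfl h1 h with
          ⟨m, a1, a2, a3, a4⟩ | ⟨m, l, a1, a2, a3, a4, h⟩
        · exact Or.inl ⟨m, a1, by omega, a3, a4⟩
        · rw [hatS_eq he a1 (by omega) a3 a4] at h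
          exact ihb m (by omega) (.t (S m l)) (S_inG he a1 (by omega) a3 a4)
            (fun m' b1 b2 b3 => S_lt he a1 (by omega) a3 a4 b1 b2 b3) h
      · have hgf : g' ≠ f := by
          rintro rfl
          exact hT (he.ts_complete as hG)
        rw [stepE, hg.p2 g' as hG (fun j h1 h2 h3 => hT ⟨j, h1, h2, h3⟩)] at h
        rcases sub_inv h with h | ⟨b, hb, h⟩
        · simp only [EufExpr.t.injEq, EufTerm.app.injEq] at h
          obtain ⟨rfl, hargs⟩ := h
          exact Or.inr ⟨hgf, as, hG, hargs⟩
        · cases h with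
          | appArg h =>
            obtain ⟨a, ha, rfl⟩ := List.mem_map.1 h
            exact ih' _ (.appArg ha) hb
    | ite C a b =>
      rw [stepE, hg.p3] at h
      rcases sub_inv h with h | ⟨b, hb, h⟩
      · cases h
      · cases h with
        | iteC => exact ih' _ .iteC hb
        | ite1 => exact ih' _ .ite1 hb
        | ite2 => exact ih' _ .ite2 hb
  | f F =>
    rcases sub_inv h with h | ⟨b, hb, h⟩
    · cases h
    cases F with
    | tt => rw [stepE, stepF_tt] at h; cases h
    | ff => rw [stepE, stepF_ff] at h; cases h
    | not F => rw [stepE, stepF_not] at h; cases h; exact ih' _ .not hb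
    | and F1 F2 =>
      rw [stepE, stepF_and] at h; cases h
      · exact ih' _ .andL hb
      · exact ih' _ .andR hb
    | or F1 F2 =>
      rw [stepE, stepF_or] at h; cases h
      · exact ih' _ .orL hb
      · exact ih' _ .orR hb
    | eq F1 F2 =>
      rw [stepE, stepF_eq] at h; cases h
      · exact ih' _ .eqL hb
      · exact ih' _ .eqR hb
    | papp p as =>
      rw [stepE, stepF_papp] at h
      cases h with
      | pappArg h =>
        obtain ⟨a, ha, rfl⟩ := List.mem_map.1 h
        exact ih' _ (.pappArg ha) hb

/-! semantics -/
section
variable {D : Type}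

/-- arguments of the `i`-th and `j`-th application agree under `J` -/
def Agree (J : Interp Fn Pr D) (S : ℕ → ℕ → EufTerm Fn Pr) (k i j : ℕ) : Prop :=
  ∀ l, 1 ≤ l → l ≤ k → evalT J (S i l) = evalT J (S j l)

open Classical in
noncomputable def val (J : Interp Fn Pr D) (Ts : ℕ → EufTerm Fn Pr) (S : ℕ → ℕ → EufTerm Fn Pr)
    (k i : ℕ) : D ⊕ ℕ :=
  if ∃ j, 1 ≤ j ∧ j < i ∧ Agree J S k i j then .inr i else .inl (evalT J (Ts i))

noncomputable def toD [Nonempty D] : D ⊕ ℕ → D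
  | .inl d => d
  | .inr _ => Classical.arbitrary D

open Classical in
noncomputable def Jhat [Nonempty D] (J : Interp Fn Pr D) (n : ℕ) (Ts : ℕ → EufTerm Fn Pr)
    (S : ℕ → ℕ → EufTerm Fn Pr) (vf : ℕ → Fn) (k : ℕ) : Interp Fn Pr (D ⊕ ℕ) where
  fn g args := if h : ∃ i, 1 ≤ i ∧ i ≤ n ∧ g = vf i then val J Ts S k h.choose
    else .inl (J.fn g (args.map toD))
  pr p args := J.pr p (args.map toD)

variable [Nonempty D] {J : Interp Fn Pr D}

theorem Jhat_vf (he : ElimHyps G f k n Ts S vf hatS) {i} (h1 : 1 ≤ i) (h2 : i ≤ n) :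
    evalT (Jhat J n Ts S vf k) (.app (vf i) []) = val J Ts S k i := by
  rw [evalT_app]
  have h : ∃ j, 1 ≤ j ∧ j ≤ n ∧ vf i = vf j := ⟨i, h1, h2, rfl⟩
  simp only [Jhat, dif_pos h]
  have := h.choose_spec
  rw [← he.vf_inj _ _ h1 h2 this.1 this.2.1 this.2.2]

theorem evalF_foldr {D : Type} (I : Interp Fn Pr D) (L : List (EufFormula Fn Pr)) :
    evalF I (L.foldr .and .tt) = true ↔ ∀ F ∈ L, evalF I F = true := by
  induction L with
  | nil => simp [evalF]
  | cons F L ih => simp [evalF, ih]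

theorem evalF_C {D : Type} (I : Interp Fn Pr D) (i j : ℕ) :
    evalF I (Cform hatS k i j) = true ↔
      ∀ l, 1 ≤ l → l ≤ k → evalT I (hatS i l) = evalT I (hatS j l) := by
  rw [Cform, evalF_foldr]
  simp only [List.mem_map, List.mem_range'_1, forall_exists_index, and_imp]
  constructor
  · intro h l h1 h2
    have := h _ l h1 (by omega) rfl
    simpa [evalF] using this
  · rintro h F l h1 h2 rfl
    simpa [evalF] using h l h1 (by omega)

theorem eval_T_agree (he : ElimHyps G f k n Ts S vf hatS) {i j} (hi : 1 ≤ i) (hi' : i ≤ n)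
    (hj : 1 ≤ j) (hj' : j ≤ n) (h : Agree J S k i j) : evalT J (Ts i) = evalT J (Ts j) := by
  rw [he.ts_app i hi hi', he.ts_app j hj hj', evalT_app, evalT_app, List.map_map, List.map_map]
  congr 1
  apply List.map_congr_left
  intro l hl
  rw [List.mem_range'_1] at hl
  exact h l (by omega) (by omega)

theorem eval_V (he : ElimHyps G f k n Ts S vf hatS) {i} (hi : i ≤ n)
    (hC : ∀ j, 1 ≤ j → j < i →
      (evalF (Jhat J n Ts S vf k) (Cform hatS k i j) = true ↔ Agree J S k i j)) (d : ℕ) :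
    ∀ j, i - j = d → 1 ≤ j → j ≤ i → (∀ j', 1 ≤ j' → j' < j → ¬ Agree J S k i j') →
    evalT (Jhat J n Ts S vf k) (Vterm vf hatS k i j) = .inl (evalT J (Ts i)) := by
  induction d with
  | zero =>
    intro j hd h1 h2 hn
    have : j = i := by omega
    subst this
    rw [Vterm, dif_neg (by omega), Jhat_vf he h1 hi, val, if_neg]
    rintro ⟨j', a1, a2, a3⟩
    exact hn j' a1 a2 a3
  | succ d ih =>
    intro j hd h1 h2 hn
    rw [Vterm, dif_pos (by omega), evalT]
    by_cases hA : Agree J S k i j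
    · rw [if_pos ((hC j h1 (by omega)).2 hA), Jhat_vf he h1 (by omega), val, if_neg,
        eval_T_agree he (by omega) hi h1 (by omega) hA]
      rintro ⟨j', a1, a2, a3⟩
      exact hn j' a1 a2 fun l b1 b2 => (hA l b1 b2).trans (a3 l b1 b2)
    · rw [if_neg (fun h => hA ((hC j h1 (by omega)).1 h))]
      refine ih (j+1) (by omega) (by omega) (by omega) ?_
      intro j' a1 a2
      rcases Nat.lt_or_ge j' j with h | h
      · exact hn j' a1 h
      · have : j' = j := by omega
        rwa [this]

def EvOK (J : Interp Fn Pr D) (n : ℕ) (Ts : ℕ → EufTerm Fn Pr)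
    (S : ℕ → ℕ → EufTerm Fn Pr) (vf : ℕ → Fn) (hatS : ℕ → ℕ → EufTerm Fn Pr) (k : ℕ) :
    EufExpr Fn Pr → Prop
  | .t T => evalT (Jhat J n Ts S vf k) (stepT Ts vf hatS k n T) = .inl (evalT J T)
  | .f F => evalF (Jhat J n Ts S vf k) (stepF Ts vf hatS k n F) = evalF J F

theorem eval_ok (he : ElimHyps G f k n Ts S vf hatS) (b : ℕ) :
    ∀ e : EufExpr Fn Pr, SubExpr e (.f G) →
    (∀ m, 1 ≤ m → m ≤ n → SubExpr (.t (Ts m)) e → m < b) →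
    EvOK J n Ts S vf hatS k e := by
  have hg := good he n le_rfl
  induction b using Nat.strong_induction_on with
  | _ b ihb =>
  intro e
  induction e using expr_ind with
  | h e ih =>
  intro hG hlt
  have iht : ∀ T, ImmSub (.t T) e → 
      evalT (Jhat J n Ts S vf k) (stepT Ts vf hatS k n T) = .inl (evalT J T) :=
    fun e' h => ih _ h (sub_imm h hG) (fun m h1 h2 h3 => hlt m h1 h2 (sub_tail h3 h))
  have ihf : ∀ T, ImmSub (.f T) e → 
      evalF (Jhat J n Ts S vf k) (stepF Ts vf hatS k n T) = evalF J T :=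
    fun e' h => ih _ h (sub_imm h hG) (fun m h1 h2 h3 => hlt m h1 h2 (sub_tail h3 h))
  have ihm : ∀ as : List (EufTerm Fn Pr), (∀ a ∈ as, ImmSub (.t a) e) →
      ((as.map (stepT Ts vf hatS k n)).map (evalT (Jhat J n Ts S vf k))).map toD
        = as.map (evalT J) := by
    intro as h
    rw [List.map_map, List.map_map]
    apply List.map_congr_left
    intro a ha
    simp only [Function.comp]
    rw [iht a (h a ha)]; rfl
  cases e with
  | t T =>
    rw [EvOK]
    cases T with
    | app g as =>
      by_cases hT : ∃ j, 1 ≤ j ∧ j ≤ n ∧ EufTerm.app g as = Ts j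
      · obtain ⟨j, h1, h2, h3⟩ := hT
        have hjb := hlt j h1 h2 (by rw [h3]; exact .refl)
        rw [h3, hg.p1 j h1 h2, Uterm]
        have hS : ∀ m l, 1 ≤ m → m ≤ j → 1 ≤ l → l ≤ k →
            evalT (Jhat J n Ts S vf k) (hatS m l) = .inl (evalT J (S m l)) := by
          intro m l a1 a2 a3 a4
          rw [hatS_eq he a1 (by omega) a3 a4]
          exact ihb m (by omega) (.t (S m l)) (S_inG he a1 (by omega) a3 a4)
            (fun m' b1 b2 b3 => S_lt he a1 (by omega) a3 a4 b1 b2 b3)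
        refine eval_V he h2 ?_ _ 1 rfl le_rfl h1 (fun j' _ _ => by omega)
        intro j' a1 a2
        rw [evalF_C, Agree]
        refine forall_congr' fun l => forall_congr' fun b1 => forall_congr' fun b2 => ?_
        rw [hS j l h1 le_rfl b1 b2, hS j' l a1 a2.le b1 b2, Sum.inl.injEq]
      · rw [hg.p2 g as hG (fun j h1 h2 h3 => hT ⟨j, h1, h2, h3⟩), evalT_app, evalT_app]
        have hnv : ¬ ∃ i, 1 ≤ i ∧ i ≤ n ∧ g = vf i := by
          rintro ⟨i, a1, a2, rfl⟩
          exact he.vf_fresh i a1 a2 ⟨as, hG⟩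
        rw [← ihm as (fun a ha => .appArg ha)]
        simp only [Jhat, dif_neg hnv]
    | ite C a b =>
      rw [hg.p3, evalT, evalT, ihf _ .iteC, iht _ .ite1, iht _ .ite2]
      split <;> rfl
  | f F =>
    rw [EvOK]
    cases F with
    | tt => rw [stepF_tt, evalF, evalF]
    | ff => rw [stepF_ff, evalF, evalF]
    | not F => rw [stepF_not, evalF, evalF, ihf _ .not]
    | and F1 F2 => rw [stepF_and, evalF, evalF, ihf _ .andL, ihf _ .andR]
    | or F1 F2 => rw [stepF_or, evalF, evalF, ihf _ .orL, ihf _ .orR]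
    | eq F1 F2 => rw [stepF_eq, evalF, evalF, iht _ .eqL, iht _ .eqR]; simp
    | papp p as =>
      rw [stepF_papp, evalF_papp, evalF_papp, ← ihm as (fun a ha => .pappArg ha)]
      rfl

end
end
end PD

theorem preserve_diverse_lemma {Fn Pr D : Type} [Nonempty D] (G : EufFormula Fn Pr)
    (f : Fn) (k n : ℕ) (Ts : ℕ → EufTerm Fn Pr) (S : ℕ → ℕ → EufTerm Fn Pr)
    (vf : ℕ → Fn) (hatS : ℕ → ℕ → EufTerm Fn Pr)
    (he : ElimHyps G f k n Ts S vf hatS) (Sg : Set Fn) (hf : f ∈ Sg)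
    (J : Interp Fn Pr D) (hdiv : DiverseFor J G Sg) :
    ∃ (D' : Type) (_ : Nonempty D') (Jh : Interp Fn Pr D'),
      DiverseFor Jh (elimResult G n Ts vf hatS k)
        ((Sg \ {f}) ∪ {g | ∃ i, 1 ≤ i ∧ i ≤ n ∧ g = vf i}) ∧
      evalF Jh (elimResult G n Ts vf hatS k) = evalF J G := by
  have hg := PD.good he n le_rfl
  have ok : ∀ e : EufExpr Fn Pr, SubExpr e (.f G) → PD.EvOK J n Ts S vf hatS k e :=
    fun e h => PD.eval_ok he (n+1) e h (fun m _ h _ => by omega)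
  have okT : ∀ T : EufTerm Fn Pr, TermInF T G →
      evalT (PD.Jhat J n Ts S vf k) (stepT Ts vf hatS k n T) = .inl (evalT J T) :=
    fun T h => ok (.t T) h
  have cl : ∀ g args, TermInF (.app g args) (elimResult G n Ts vf hatS k) → _ :=
    fun g args h => PD.classify he (g := g) (args := args) (n+1) (.f G) .refl
      (fun m _ h _ => by omega) h
  have hp2 : ∀ g as, g ≠ f → TermInF (.app g as) G →
      evalT (PD.Jhat J n Ts S vf k) (.app g (as.map (stepT Ts vf hatS k n))) =
        .inl (evalT J (.app g as)) := by
    intro g as hgf h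
    rw [← okT _ h, hg.p2 g as h]
    intro j h1 h2 h3
    rw [he.ts_app j h1 h2] at h3
    simp only [EufTerm.app.injEq] at h3
    exact hgf h3.1
  -- value of a variable being `inl`
  have hv : ∀ i d, PD.val J Ts S k i = .inl d →
      d = evalT J (Ts i) ∧ ¬ ∃ j, 1 ≤ j ∧ j < i ∧ PD.Agree J S k i j := by
    intro i d h
    unfold PD.val at h
    split at h
    · cases h
    · rename_i hn
      exact ⟨(Sum.inl.inj h).symm, hn⟩
  have dT : ∀ i, 1 ≤ i → i ≤ n → ∀ g as, TermInF (.app g as) G →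
      evalT J (Ts i) = evalT J (.app g as) → g = f ∧
        List.Forall₂ (fun a b => evalT J a = evalT J b) ((List.range' 1 k).map (S i)) as := by
    intro i h1 h2 g as hG h
    have hT := he.ts_app i h1 h2
    rw [hT] at h
    obtain ⟨as2, h3, h4⟩ := hdiv f _ hf (hT ▸ he.ts_occurs i h1 h2) (.app g as) ⟨trivial, hG⟩ h
    simp only [EufTerm.app.injEq] at h3
    exact ⟨h3.1, h3.2 ▸ h4⟩
  have agree : ∀ i j, 1 ≤ i → i ≤ n → 1 ≤ j → j ≤ n → evalT J (Ts i) = evalT J (Ts j) →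
      PD.Agree J S k i j := by
    intro i j h1 h2 h3 h4 h
    have hT := he.ts_app j h3 h4
    rw [hT] at h
    have := (dT i h1 h2 f _ (hT ▸ he.ts_occurs j h3 h4) h).2
    intro l a1 a2
    rw [List.forall₂_map_left_iff, List.forall₂_map_right_iff, List.forall₂_same] at this
    exact this l (by rw [List.mem_range'_1]; omega)
  refine ⟨D ⊕ ℕ, inferInstance, PD.Jhat J n Ts S vf k, ?_, ok (.f G) .refl⟩
  intro g args hgS hocc T2 hT2 heq
  obtain ⟨happ, hocc2⟩ := hT2
  cases T2 with
  | ite C a b => exact happ.elim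
  | app g2 args2 =>
  rcases cl g args hocc with ⟨i, i1, i2, rfl, rfl⟩ | ⟨hgf, as, hG, rfl⟩
  · rw [PD.Jhat_vf he i1 i2] at heq
    rcases cl g2 args2 hocc2 with ⟨j, j1, j2, rfl, rfl⟩ | ⟨hgf2, as2, hG2, rfl⟩
    · rw [PD.Jhat_vf he j1 j2] at heq
      suffices i = j by subst this; exact ⟨[], rfl, .nil⟩
      rcases hvi : PD.val J Ts S k i with d | m
      · rw [hvi] at heq
        obtain ⟨e1, n1⟩ := hv i d hvi
        obtain ⟨e2, n2⟩ := hv j d heq.symm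
        have e := e1.symm.trans e2
        rcases lt_trichotomy i j with h | h | h
        · exact absurd ⟨i, i1, h, agree j i j1 j2 i1 i2 e.symm⟩ n2
        · exact h
        · exact absurd ⟨j, j1, h, agree i j i1 i2 j1 j2 e⟩ n1
      · rw [hvi] at heq
        unfold PD.val at hvi heq
        split at hvi <;> split at heq <;> simp_all
    · rw [hp2 g2 as2 hgf2 hG2] at heq
      exact absurd (dT i i1 i2 g2 as2 hG2 (hv i _ heq).1.symm).1 hgf2
  · rw [hp2 g as hgf hG] at heq
    rcases cl g2 args2 hocc2 with ⟨j, j1, j2, rfl, rfl⟩ | ⟨hgf2, as2, hG2, rfl⟩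
    · rw [PD.Jhat_vf he j1 j2] at heq
      exact absurd (dT j j1 j2 g as hG (hv j _ heq.symm).1.symm).1 hgf
    · rw [hp2 g2 as2 hgf2 hG2] at heq
      have hgSg : g ∈ Sg := by
        rcases hgS with h | ⟨i, i1, i2, rfl⟩
        · exact h.1
        · exact absurd ⟨as, hG⟩ (he.vf_fresh i i1 i2)
      obtain ⟨as3, h1, h2⟩ := hdiv g as hgSg hG (.app g2 as2) ⟨trivial, hG2⟩ (Sum.inl.inj heq)
      simp only [EufTerm.app.injEq] at h1
      obtain ⟨rfl, rfl⟩ := h1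
      refine ⟨_, rfl, ?_⟩
      rw [List.forall₂_map_left_iff, List.forall₂_map_right_iff]
      rw [List.forall₂_iff_get] at h2 ⊢
      refine ⟨h2.1, fun i a b => ?_⟩
      rw [okT _ (PD.sub_imm (.appArg (List.get_mem _ _)) hG),
        okT _ (PD.sub_imm (.appArg (List.get_mem _ _)) hG2), h2.2 i a b]
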